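/- Up to integral equivalence (i.e., modulo the action of GL₂(ℤ) and translations by ℤ²), there are exactly 16 convex lattice polygons in ℝ² having exactly one interior lattice point, and exactly 12 of them have at most 4 vertices. -/

import Mathlib

/-- An integral (lattice) polygon: the convex hull of a finite subset of `ℤ²`. -/
def IsLatticePolygon (A : Set (Fin 2 → ℝ)) : Prop :=
  ∃ F : Finset (Fin 2 → ℤ),
    A = convexHull ℝ ((fun p : Fin 2 → ℤ => fun i => (p i : ℝ)) '' ↑F)

/-- Integral equivalence: `B` is the image of `A` under `x ↦ Mx + v` with
`M ∈ GL₂(ℤ)` and `v ∈ ℤ²`. -/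
def IntegralEquiv (A B : Set (Fin 2 → ℝ)) : Prop :=
  ∃ M : Matrix (Fin 2) (Fin 2) ℤ, IsUnit M.det ∧ ∃ v : Fin 2 → ℤ,
    B = (fun x => (M.map (Int.cast : ℤ → ℝ)).mulVec x + fun i => (v i : ℝ)) '' A

/-! ### Planar integer vectors -/

/-- The determinant of two planar integer vectors. -/
def wedge (p q : ℤ × ℤ) : ℤ := p.1 * q.2 - p.2 * q.1

/-- The linear map sending the standard basis of `ℤ²` to `u`, `w`. -/
def act (u w z : ℤ × ℤ) : ℤ × ℤ := (z.1 * u.1 + z.2 * w.1, z.1 * u.2 + z.2 * w.2)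

/-- The vectors `u`, `w` form a basis of `ℤ²`. -/
def IsLatticeBasis (u w : ℤ × ℤ) : Prop := wedge u w = 1 ∨ wedge u w = -1

instance (u w : ℤ × ℤ) : Decidable (IsLatticeBasis u w) :=
  inferInstanceAs (Decidable (wedge u w = 1 ∨ wedge u w = -1))

theorem wedge_act (u w p q : ℤ × ℤ) :
    wedge (act u w p) (act u w q) = wedge u w * wedge p q := by
  simp only [wedge, act]; ring

theorem act_act (u w u' w' z : ℤ × ℤ) :
    act u w (act u' w' z) = act (act u w u') (act u w w') z := by
  ext <;> simp only [act] <;> ring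

theorem IsLatticeBasis.act {u w u' w' : ℤ × ℤ} (h : IsLatticeBasis u w)
    (h' : IsLatticeBasis u' w') : IsLatticeBasis (act u w u') (act u w w') := by
  unfold IsLatticeBasis at *
  rw [wedge_act]
  rcases h with h | h <;> rcases h' with h' | h' <;> simp [h, h']

theorem IsLatticeBasis.exists_act_eq {u w : ℤ × ℤ} (h : IsLatticeBasis u w) (p : ℤ × ℤ) :
    ∃ z, _root_.act u w z = p := by
  refine ⟨(wedge u w * wedge p w, wedge u w * wedge u p), ?_⟩
  have h1 : wedge u w * wedge u w = 1 := by rcases h with h | h <;> simp [h]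
  simp only [wedge] at h1
  ext <;> simp only [_root_.act, wedge]
  · linear_combination p.1 * h1
  · linear_combination p.2 * h1

theorem IsLatticeBasis.act_ne_zero {u w : ℤ × ℤ} (h : IsLatticeBasis u w) {z : ℤ × ℤ}
    (hz : z ≠ 0) : _root_.act u w z ≠ 0 := by
  intro h0
  have h1 : wedge u w * wedge u w = 1 := by rcases h with h | h <;> simp [h]
  have hx := congrArg Prod.fst h0
  have hy := congrArg Prod.snd h0
  simp only [_root_.act, wedge, Prod.fst_zero, Prod.snd_zero] at h1 hx hy
  apply hz
  ext
  · rw [Prod.fst_zero]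
    linear_combination (-z.1) * h1 + (u.1 * w.2 - u.2 * w.1) * (w.2 * hx - w.1 * hy)
  · rw [Prod.snd_zero]
    linear_combination (-z.2) * h1 + (u.1 * w.2 - u.2 * w.1) * (u.1 * hy - u.2 * hx)

/-! ### Boundary point sets of polygons with one interior lattice point -/

/-- The properties of the set of nonzero lattice points of a lattice polygon whose only interior
lattice point is the origin from which the classification follows. -/
structure IsReflexiveSet (S : Set (ℤ × ℤ)) : Prop where
  mem_of_combination : ∀ {p q r : ℤ × ℤ}, p ∈ S → q ∈ S → r ≠ 0 → ∀ a b k : ℤ, 0 ≤ a → 0 ≤ b →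
    0 < k → a + b ≤ k → k * r.1 = a * p.1 + b * q.1 → k * r.2 = a * p.2 + b * q.2 →
    a + b = k ∧ r ∈ S
  exists_wedge_pos : ∀ u : ℤ × ℤ, u ≠ 0 → ∃ p ∈ S, 0 < wedge u p

theorem IsReflexiveSet.preimage_act {S : Set (ℤ × ℤ)} (hS : IsReflexiveSet S) {u w : ℤ × ℤ}
    (h : IsLatticeBasis u w) : IsReflexiveSet (act u w ⁻¹' S) where
  mem_of_combination {p q r} hp hq hr a b k ha hb hk hab h1 h2 := by
    refine hS.mem_of_combination hp hq (h.act_ne_zero hr) a b k ha hb hk hab ?_ ?_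
    · simp only [act]; linear_combination u.1 * h1 + w.1 * h2
    · simp only [act]; linear_combination u.2 * h1 + w.2 * h2
  exists_wedge_pos v hv := by
    have key : ∃ p ∈ S, 0 < wedge u w * wedge (act u w v) p := by
      rcases h with h' | h'
      · simpa [h'] using hS.exists_wedge_pos _ (IsLatticeBasis.act_ne_zero (.inl h') hv)
      · obtain ⟨p, hp, hp'⟩ := hS.exists_wedge_pos (-act u w v)
          (neg_ne_zero.2 (IsLatticeBasis.act_ne_zero (.inr h') hv))
        refine ⟨p, hp, ?_⟩
        simp only [wedge, Prod.fst_neg, Prod.snd_neg] at hp' ⊢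
        simp only [wedge] at h'
        rw [h']
        linarith
    obtain ⟨p, hp, hpos⟩ := key
    obtain ⟨z, rfl⟩ := h.exists_act_eq p
    refine ⟨z, hp, ?_⟩
    rw [wedge_act, ← mul_assoc] at hpos
    have h1 : wedge u w * wedge u w = 1 := by rcases h with h | h <;> simp [h]
    rwa [h1, one_mul] at hpos

/-! ### The sixteen polygons -/

/-- The nonzero lattice points, in counterclockwise order, of the sixteen polygons. -/
def boundaryCycle : Fin 16 → List (ℤ × ℤ) :=
  ![[(1, 0), (0, 1), (-1, -1)],
    [(1, 0), (0, 1), (-1, -2), (0, -1)],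
    [(1, 0), (0, 1), (-1, -1), (0, -1)],
    [(1, 0), (0, 1), (-1, 0), (0, -1)],
    [(1, 0), (0, 1), (-1, -1), (0, -1), (1, -1)],
    [(1, 0), (0, 1), (-1, 0), (-1, -1), (0, -1)],
    [(1, 0), (0, 1), (-1, -1), (0, -1), (1, -1), (2, -1)],
    [(1, 0), (0, 1), (-1, 0), (-2, -1), (-1, -1), (0, -1)],
    [(1, 0), (0, 1), (-1, 0), (-1, -1), (0, -1), (1, -1)],
    [(1, 0), (0, 1), (-1, 1), (-1, 0), (0, -1), (1, -1)],
    [(1, 0), (0, 1), (-1, 0), (-2, -1), (-1, -1), (0, -1), (1, -1)],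
    [(1, 0), (0, 1), (-1, 1), (-1, 0), (-1, -1), (0, -1), (1, -1)],
    [(1, 0), (0, 1), (-1, 0), (-2, -1), (-1, -1), (0, -1), (1, -1), (2, -1)],
    [(1, 0), (0, 1), (-1, 1), (-2, 1), (-1, 0), (0, -1), (1, -1), (2, -1)],
    [(1, 0), (0, 1), (-1, 1), (-1, 0), (-1, -1), (0, -1), (1, -1), (2, -1)],
    [(1, 0), (0, 1), (-1, 2), (-1, 1), (-1, 0), (-1, -1), (0, -1), (1, -1), (2, -1)]]

/-- The pairs of cyclically consecutive elements of a list. -/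
def cyclicPairs {α : Type*} (L : List α) : List (α × α) := L.zip (L.rotate 1)

theorem mem_of_mem_cyclicPairs {α : Type*} {L : List α} {e : α × α} (he : e ∈ cyclicPairs L) :
    e.1 ∈ L ∧ e.2 ∈ L := by
  have h := List.of_mem_zip (a := e.1) (b := e.2) (by simpa [cyclicPairs] using he)
  exact ⟨h.1, List.mem_rotate.1 h.2⟩

theorem forall_mem_of_cyclicPairs {α : Type*} {L : List α} {Q : α → Prop}
    (h : ∀ e ∈ cyclicPairs L, Q e.1 → Q e.2) {a b : α} (ha : a ∈ L) (hb : b ∈ L) (hQ : Q a) :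
    Q b := by
  obtain ⟨i, hi, rfl⟩ := List.getElem_of_mem ha
  obtain ⟨j, hj, rfl⟩ := List.getElem_of_mem hb
  have hn : 0 < L.length := by omega
  have step : ∀ k (hk : k < L.length), Q L[k] → Q (L[(k + 1) % L.length]'(Nat.mod_lt _ hn)) := by
    intro k hk
    have hk' : k < (cyclicPairs L).length := by simpa [cyclicPairs] using hk
    have := h _ (List.getElem_mem hk')
    simpa [cyclicPairs, List.getElem_rotate] using this
  have key : ∀ m, Q (L[(i + m) % L.length]'(Nat.mod_lt _ hn)) := by
    intro m
    induction m with
    | zero => simpa [Nat.mod_eq_of_lt hi] using hQ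
    | succ m ih =>
      have := step _ _ ih
      simpa [← add_assoc] using this
  have := key (j + (L.length - i))
  have he : (i + (j + (L.length - i))) % L.length = j := by
    rw [show i + (j + (L.length - i)) = j + L.length by omega, Nat.add_mod_right,
      Nat.mod_eq_of_lt hj]
  simpa [he] using this

/-- A convex closed chain of lattice vectors whose consecutive terms form bases and that is not
contained in an open half-plane. -/
def IsReflexiveCycle (L : List (ℤ × ℤ)) : Prop :=
  (∀ e ∈ cyclicPairs L, wedge e.1 e.2 = 1) ∧
  (∀ e ∈ cyclicPairs L, ∀ r ∈ L, wedge r (e.2 - e.1) ≤ 1) ∧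
  ((∃ p ∈ L, -p ∈ L) ∨ ∃ p ∈ L, ∃ q ∈ L, -p - q ∈ L)

theorem isReflexiveCycle_boundaryCycle (i : Fin 16) : IsReflexiveCycle (boundaryCycle i) := by
  revert i
  unfold IsReflexiveCycle
  decide +kernel

/-- Some cone spanned by consecutive vectors of a reflexive cycle contains a given real vector. -/
theorem IsReflexiveCycle.exists_cone {L : List (ℤ × ℤ)} (hL : IsReflexiveCycle L) (x y : ℝ) :
    ∃ e ∈ cyclicPairs L, 0 ≤ x * e.2.2 - y * e.2.1 ∧ 0 ≤ e.1.1 * y - e.1.2 * x := by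
  by_contra! hcon
  obtain ⟨-, -, hrel⟩ := hL
  have hstep : ∀ e ∈ cyclicPairs L, (0 : ℝ) ≤ e.1.1 * y - e.1.2 * x →
      (0 : ℝ) < e.2.1 * y - e.2.2 * x := by
    intro e he h0
    by_contra! h1
    exact absurd (hcon e he (by linarith)) (not_lt.2 h0)
  have hall : (∀ p ∈ L, (0 : ℝ) < p.1 * y - p.2 * x) ∨ ∀ p ∈ L, (p.1 * y - p.2 * x : ℝ) < 0 := by
    by_cases hex : ∃ a ∈ L, (0 : ℝ) ≤ a.1 * y - a.2 * x
    · obtain ⟨a, ha, ha0⟩ := hex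
      obtain ⟨k, hk, hka⟩ := List.getElem_of_mem ha
      have hk' : k < (cyclicPairs L).length := by simpa [cyclicPairs] using hk
      have he := List.getElem_mem hk'
      have h1 : ((cyclicPairs L)[k]).1 = a := by simpa [cyclicPairs] using hka
      left
      intro p hp
      refine forall_mem_of_cyclicPairs (Q := fun p : ℤ × ℤ => (0 : ℝ) < p.1 * y - p.2 * x)
        (fun e he h => hstep e he h.le) (mem_of_mem_cyclicPairs he).2 hp
        (hstep _ he (by rw [h1]; exact ha0))
    · push Not at hex
      exact .inr hex
  rcases hrel with ⟨p, hp, hq⟩ | ⟨p, hp, q, hq, hr⟩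
  · rcases hall with h | h
    · have h1 := h _ hp
      have h2 := h _ hq
      push_cast [Prod.fst_neg, Prod.snd_neg] at h2
      linarith
    · have h1 := h _ hp
      have h2 := h _ hq
      push_cast [Prod.fst_neg, Prod.snd_neg] at h2
      linarith
  · rcases hall with h | h
    · have h1 := h _ hp
      have h2 := h _ hq
      have h3 := h _ hr
      push_cast [Prod.fst_neg, Prod.snd_neg, Prod.fst_sub, Prod.snd_sub] at h3
      linarith
    · have h1 := h _ hp
      have h2 := h _ hq
      have h3 := h _ hr
      push_cast [Prod.fst_neg, Prod.snd_neg, Prod.fst_sub, Prod.snd_sub] at h3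
      linarith

/-- The integer version of `IsReflexiveCycle.exists_cone`, in coordinates. -/
theorem IsReflexiveCycle.exists_combination {L : List (ℤ × ℤ)} (hL : IsReflexiveCycle L)
    (z : ℤ × ℤ) : ∃ e ∈ cyclicPairs L, ∃ a b : ℤ, 0 ≤ a ∧ 0 ≤ b ∧
      z.1 = a * e.1.1 + b * e.2.1 ∧ z.2 = a * e.1.2 + b * e.2.2 ∧ wedge z (e.2 - e.1) = a + b := by
  obtain ⟨e, he, h1, h2⟩ := hL.exists_cone z.1 z.2
  have hdet := hL.1 e he
  simp only [wedge] at hdet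
  refine ⟨e, he, wedge z e.2, wedge e.1 z, ?_, ?_, ?_, ?_, ?_⟩
  · simp only [wedge]; exact_mod_cast h1
  · simp only [wedge]; exact_mod_cast h2
  · simp only [wedge]; linear_combination (-z.1) * hdet
  · simp only [wedge]; linear_combination (-z.2) * hdet
  · simp only [wedge, Prod.fst_sub, Prod.snd_sub]; ring

/-! ### Classification of reflexive sets -/

/-- The set `S` contains the image of the `i`-th boundary cycle under some element of
`GL₂(ℤ)`. -/
def ContainsCopy (S : Set (ℤ × ℤ)) (i : Fin 16) : Prop :=
  ∃ u w, IsLatticeBasis u w ∧ ∀ p ∈ boundaryCycle i, act u w p ∈ S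

theorem ContainsCopy.of_preimage {S : Set (ℤ × ℤ)} {u w : ℤ × ℤ} (h : IsLatticeBasis u w)
    {i : Fin 16} (hi : ContainsCopy (act u w ⁻¹' S) i) : ContainsCopy S i := by
  obtain ⟨u', w', h', hi⟩ := hi
  refine ⟨_, _, h.act h', fun p hp => ?_⟩
  rw [← act_act]
  exact hi p hp

/-- Adjoining the sum of two consecutive boundary points either creates a second interior lattice
point or yields a polygon later in the list. -/
theorem boundaryCycle_growth : ∀ i : Fin 16, ∀ e ∈ cyclicPairs (boundaryCycle i),
    (∃ p ∈ boundaryCycle i, p + (e.1 + e.2) ≠ 0 ∧ 3 ∣ p.1 + (e.1.1 + e.2.1) ∧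
      3 ∣ p.2 + (e.1.2 + e.2.2)) ∨
    ∃ j : Fin 16, i < j ∧ (boundaryCycle j).length = (boundaryCycle i).length + 1 ∧
      ∃ u ∈ (e.1 + e.2) :: boundaryCycle i, ∃ w ∈ (e.1 + e.2) :: boundaryCycle i,
        IsLatticeBasis u w ∧ ∀ p ∈ boundaryCycle j, act u w p ∈ (e.1 + e.2) :: boundaryCycle i := by
  decide +kernel

theorem IsReflexiveSet.exists_lt_containsCopy {S : Set (ℤ × ℤ)} (hS : IsReflexiveSet S)
    (h0 : (0 : ℤ × ℤ) ∉ S) {i : Fin 16} (hi : ∀ p ∈ boundaryCycle i, p ∈ S) {z : ℤ × ℤ}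
    (hz : z ∈ S) (hzi : z ∉ boundaryCycle i) : ∃ j, i < j ∧ ContainsCopy S j := by
  obtain ⟨e, he, a, b, ha, hb, h1, h2, -⟩ :=
    (isReflexiveCycle_boundaryCycle i).exists_combination z
  obtain ⟨hm1, hm2⟩ := mem_of_mem_cyclicPairs he
  have hdet := (isReflexiveCycle_boundaryCycle i).1 e he
  have hne1 : e.1 ≠ 0 := fun h => h0 (h ▸ hi _ hm1)
  have hne2 : e.2 ≠ 0 := fun h => h0 (h ▸ hi _ hm2)
  have hz0 : z ≠ 0 := fun h => h0 (h ▸ hz)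
  have ha' : 0 < a := by
    rcases ha.lt_or_eq with ha | rfl
    · exact ha
    have hb1 : 0 < b := by
      rcases hb.lt_or_eq with hb | rfl
      · exact hb
      · exact absurd (Prod.ext (by simpa using h1) (by simpa using h2)) hz0
    have := (hS.mem_of_combination hz hz hne2 1 0 b (by simp) (by simp) hb1 (by omega)
      (by linarith) (by linarith)).1
    obtain rfl : b = 1 := by omega
    exact absurd (by convert hm2 using 1; ext <;> simp [h1, h2]) hzi
  have hb' : 0 < b := by
    rcases hb.lt_or_eq with hb | rfl
    · exact hb
    have := (hS.mem_of_combination hz hz hne1 1 0 a (by simp) (by simp) ha' (by omega)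
      (by linarith) (by linarith)).1
    obtain rfl : a = 1 := by omega
    exact absurd (by convert hm1 using 1; ext <;> simp [h1, h2]) hzi
  have hq0 : e.1 + e.2 ≠ 0 := by
    intro h
    have h3 := congrArg Prod.fst h
    have h4 := congrArg Prod.snd h
    simp only [Prod.fst_add, Prod.snd_add, Prod.fst_zero, Prod.snd_zero] at h3 h4
    have : wedge e.1 e.2 = 0 := by
      simp only [wedge]; linear_combination e.1.1 * h4 - e.1.2 * h3
    omega
  have hq : e.1 + e.2 ∈ S := by
    rcases le_total a b with hab | hab
    · refine (hS.mem_of_combination hz (hi _ hm1) hq0 1 (b - a) b (by simp) (by omega) hb'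
        (by omega) ?_ ?_).2
      · rw [Prod.fst_add]; linear_combination -h1
      · rw [Prod.snd_add]; linear_combination -h2
    · refine (hS.mem_of_combination hz (hi _ hm2) hq0 1 (a - b) a (by simp) (by omega) ha'
        (by omega) ?_ ?_).2
      · rw [Prod.fst_add]; linear_combination -h1
      · rw [Prod.snd_add]; linear_combination -h2
  have hsub : ∀ p ∈ (e.1 + e.2) :: boundaryCycle i, p ∈ S := by
    intro p hp
    rcases List.mem_cons.1 hp with rfl | hp
    exacts [hq, hi p hp]
  rcases boundaryCycle_growth i e he with ⟨p, hp, hne, ⟨x, hx⟩, ⟨y, hy⟩⟩ |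
    ⟨j, hij, -, u, -, w, -, hbas, hj⟩
  · have hr : ((x, y) : ℤ × ℤ) ≠ 0 := by
      rintro h
      simp only [Prod.mk_eq_zero] at h
      exact hne (Prod.ext (by simp [hx, h.1]) (by simp [hy, h.2]))
    have := (hS.mem_of_combination (hi p hp) hq hr 1 1 3 (by simp) (by simp) (by simp) (by simp)
      (by simp; linarith) (by simp; linarith)).1
    omega
  · exact ⟨j, hij, u, w, hbas, fun p hp => hsub _ (hj p hp)⟩

theorem IsReflexiveSet.exists_isLatticeBasis {S : Set (ℤ × ℤ)} (hS : IsReflexiveSet S)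
    {p : ℤ × ℤ} (hp : p ∈ S) (hp0 : p ≠ 0) : ∃ w, IsLatticeBasis p w := by
  have hg : 0 < Int.gcd p.1 p.2 := by
    rw [Int.gcd_pos_iff]
    by_contra! h
    exact hp0 (Prod.ext h.1 h.2)
  obtain ⟨x, hx⟩ := Int.gcd_dvd_left p.1 p.2
  obtain ⟨y, hy⟩ := Int.gcd_dvd_right p.1 p.2
  have hr : ((x, y) : ℤ × ℤ) ≠ 0 := by
    intro h
    simp only [Prod.mk_eq_zero] at h
    exact hp0 (Prod.ext (by rw [hx, h.1]; simp) (by rw [hy, h.2]; simp))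
  have h1 := (hS.mem_of_combination hp hp hr 1 0 (Int.gcd p.1 p.2) (by simp) (by simp)
    (by exact_mod_cast hg) (by omega) (by simp [← hx]) (by simp [← hy])).1
  have hbez := Int.gcd_eq_gcd_ab p.1 p.2
  refine ⟨(-Int.gcdB p.1 p.2, Int.gcdA p.1 p.2), .inl ?_⟩
  simp only [wedge]
  linarith

theorem IsReflexiveSet.exists_mem_height_one {S : Set (ℤ × ℤ)} (hS : IsReflexiveSet S)
    (h : ((1, 0) : ℤ × ℤ) ∈ S) : ∃ c, ((c, 1) : ℤ × ℤ) ∈ S := by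
  obtain ⟨q, hq, hpos⟩ := hS.exists_wedge_pos (1, 0) (by simp)
  simp only [wedge, one_mul, zero_mul, sub_zero] at hpos
  have h1 := Int.emod_nonneg (-q.1) hpos.ne'
  have h2 := Int.emod_lt_of_pos (-q.1) hpos
  have h3 := Int.emod_add_mul_ediv (-q.1) q.2
  refine ⟨-(-q.1 / q.2), (hS.mem_of_combination hq h (by simp) 1 (-q.1 % q.2) q.2 (by simp) h1
    hpos (by omega) ?_ ?_).2⟩
  · simp only; linear_combination -h3
  · simp

theorem IsReflexiveSet.exists_mem_height_neg_one {S : Set (ℤ × ℤ)} (hS : IsReflexiveSet S)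
    (h : ((1, 0) : ℤ × ℤ) ∈ S) : ∃ c, ((c, -1) : ℤ × ℤ) ∈ S := by
  have hb : IsLatticeBasis (1, 0) (0, -1) := by decide
  obtain ⟨c, hc⟩ := (hS.preimage_act hb).exists_mem_height_one (by simpa [act] using h)
  exact ⟨c, by simpa [act] using hc⟩

theorem containsCopy_zero {S : Set (ℤ × ℤ)} {u w v : ℤ × ℤ} (h : IsLatticeBasis u w)
    (hu : u ∈ S) (hw : w ∈ S) (hv : v ∈ S) (hx : v.1 = -u.1 - w.1) (hy : v.2 = -u.2 - w.2) :
    ∃ i, ContainsCopy S i := by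
  refine ⟨0, u, w, h, ?_⟩
  have : v = (-u.1 - w.1, -u.2 - w.2) := Prod.ext hx hy
  rw [this] at hv
  simp only [boundaryCycle, Matrix.cons_val_zero, List.mem_cons, List.not_mem_nil, or_false]
  rintro p (rfl | rfl | rfl)
  · simpa [act] using hu
  · simpa [act] using hw
  · convert hv using 1; ext <;> simp [act] <;> ring

theorem containsCopy_one {S : Set (ℤ × ℤ)} {u w v : ℤ × ℤ} (h : IsLatticeBasis u w)
    (hu : u ∈ S) (hw : w ∈ S) (hw' : -w ∈ S) (hv : v ∈ S) (hx : v.1 = -u.1 - 2 * w.1)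
    (hy : v.2 = -u.2 - 2 * w.2) : ∃ i, ContainsCopy S i := by
  refine ⟨1, u, w, h, ?_⟩
  have : v = (-u.1 - 2 * w.1, -u.2 - 2 * w.2) := Prod.ext hx hy
  rw [this] at hv
  simp only [boundaryCycle, Matrix.cons_val_one, Matrix.cons_val_zero, List.mem_cons,
    List.not_mem_nil, or_false]
  rintro p (rfl | rfl | rfl | rfl)
  · simpa [act] using hu
  · simpa [act] using hw
  · convert hv using 1; ext <;> simp [act] <;> ring
  · convert hw' using 1; ext <;> simp [act]

theorem containsCopy_three {S : Set (ℤ × ℤ)} {u w : ℤ × ℤ} (h : IsLatticeBasis u w)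
    (hu : u ∈ S) (hw : w ∈ S) (hu' : -u ∈ S) (hw' : -w ∈ S) : ∃ i, ContainsCopy S i := by
  refine ⟨3, u, w, h, ?_⟩
  have hL : boundaryCycle 3 = [(1, 0), (0, 1), (-1, 0), (0, -1)] := rfl
  simp only [hL, List.mem_cons, List.not_mem_nil, or_false]
  rintro p (rfl | rfl | rfl | rfl)
  · simpa [act] using hu
  · simpa [act] using hw
  · convert hu' using 1; ext <;> simp [act]
  · convert hw' using 1; ext <;> simp [act]

theorem IsReflexiveSet.containsCopy_of_antipodal_one_zero {S : Set (ℤ × ℤ)}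
    (hS : IsReflexiveSet S) (h : ((1, 0) : ℤ × ℤ) ∈ S) (h' : ((-1, 0) : ℤ × ℤ) ∈ S) :
    ∃ i, ContainsCopy S i := by
  obtain ⟨c, hc⟩ := hS.exists_mem_height_one h
  obtain ⟨d, hd⟩ := hS.exists_mem_height_neg_one h
  have h1 : c + d ≤ 2 := by
    by_contra! hlt
    have := (hS.mem_of_combination (r := (1, 0)) hc hd (by simp) 1 1 (c + d) (by simp) (by simp)
      (by omega) (by omega) (by simp) (by simp)).1
    omega
  have h2 : -2 ≤ c + d := by
    by_contra! hlt
    have := (hS.mem_of_combination (r := (-1, 0)) hc hd (by simp) 1 1 (-(c + d)) (by simp)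
      (by simp) (by omega) (by omega) (by simp) (by simp)).1
    omega
  have hcases : d = -c ∨ d = 1 - c ∨ d = -1 - c ∨ d = 2 - c ∨ d = -2 - c := by omega
  rcases hcases with rfl | rfl | rfl | rfl | rfl
  · exact containsCopy_three (u := (1, 0)) (w := (c, 1)) (by simp [IsLatticeBasis, wedge]) h hc
      (by simpa using h') (by simpa using hd)
  · exact containsCopy_zero (u := (c, 1)) (w := (-1, 0)) (by simp [IsLatticeBasis, wedge]) hc h' hd
      (by simp; ring) (by simp)
  · exact containsCopy_zero (u := (c, 1)) (w := (1, 0)) (by simp [IsLatticeBasis, wedge]) hc h hd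
      (by simp; ring) (by simp)
  · exact containsCopy_one (u := (c, 1)) (w := (-1, 0)) (by simp [IsLatticeBasis, wedge]) hc h'
      (by simpa using h) hd (by simp; ring) (by simp)
  · exact containsCopy_one (u := (c, 1)) (w := (1, 0)) (by simp [IsLatticeBasis, wedge]) hc h
      (by simpa using h') hd (by simp; ring) (by simp)

theorem IsReflexiveSet.containsCopy_of_antipodal {S : Set (ℤ × ℤ)} (hS : IsReflexiveSet S)
    {x y : ℤ} (hp : (x, y) ∈ S) (hn : (-x, -y) ∈ S) (h0 : (x, y) ≠ (0 : ℤ × ℤ)) :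
    ∃ i, ContainsCopy S i := by
  obtain ⟨w, hw⟩ := hS.exists_isLatticeBasis hp h0
  obtain ⟨i, hi⟩ := (hS.preimage_act hw).containsCopy_of_antipodal_one_zero
    (by simpa [act] using hp) (by simpa [act] using hn)
  exact ⟨i, hi.of_preimage hw⟩

/-- The case of a reflexive set containing the standard basis and a point `(x, y)` with
`x + y < 0` and `y ≥ 0`. -/
theorem IsReflexiveSet.containsCopy_of_upper {S : Set (ℤ × ℤ)} (hS : IsReflexiveSet S)
    (h1 : ((1, 0) : ℤ × ℤ) ∈ S) (h2 : ((0, 1) : ℤ × ℤ) ∈ S) {x y : ℤ} (hp : (x, y) ∈ S)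
    (hxy : x + y < 0) (hy : 0 ≤ y) : ∃ i, ContainsCopy S i := by
  have hneg : ((-1, 0) : ℤ × ℤ) ∈ S → ∃ i, ContainsCopy S i := fun h =>
    hS.containsCopy_of_antipodal h1 (by simpa using h) (by simp)
  rcases hy.lt_or_eq with hy | rfl
  swap
  · exact hneg (hS.mem_of_combination hp hp (by simp) 1 0 (-x) (by simp) (by simp) (by omega)
      (by omega) (by simp) (by simp)).2
  obtain ⟨hy1, hm⟩ := hS.mem_of_combination (r := (-1, 1)) hp h2 (by simp) 1 (-x - y) (-x)
    (by simp) (by omega) (by omega) (by omega) (by simp) (by simp)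
  obtain rfl : y = 1 := by omega
  obtain ⟨c, hc⟩ := hS.exists_mem_height_neg_one h1
  have hc1 : c ≤ 2 := by
    by_contra! hlt
    have := (hS.mem_of_combination (r := (1, 0)) hc h2 (by simp) 1 1 c (by simp) (by simp)
      (by omega) (by omega) (by simp) (by simp)).1
    omega
  have hcases : c ≤ -2 ∨ c = -1 ∨ c = 0 ∨ c = 1 ∨ c = 2 := by omega
  rcases hcases with h | rfl | rfl | rfl | rfl
  · exact hneg (hS.mem_of_combination hc h2 (by simp) 1 1 (-c) (by simp) (by simp)
      (by omega) (by omega) (by simp) (by simp)).2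
  · exact containsCopy_zero (by decide) h1 h2 hc (by simp) (by simp)
  · exact hS.containsCopy_of_antipodal h2 (by simpa using hc) (by simp)
  · exact hS.containsCopy_of_antipodal hc (by simpa using hm) (by simp)
  · have hx : x ≤ -4 ∨ x = -3 ∨ x = -2 := by omega
    rcases hx with hx | rfl | rfl
    · exact hneg (hS.mem_of_combination hp hc (by simp) 1 1 (-x - 2) (by simp) (by simp)
        (by omega) (by omega) (by simp; ring) (by simp)).2
    · exact containsCopy_zero (u := (2, -1)) (w := (1, 0)) (by decide) hc h1 hp (by simp) (by simp)
    · exact hS.containsCopy_of_antipodal hc (by simpa using hp) (by simp)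

theorem IsReflexiveSet.containsCopy_of_standardBasis {S : Set (ℤ × ℤ)} (hS : IsReflexiveSet S)
    (h1 : ((1, 0) : ℤ × ℤ) ∈ S) (h2 : ((0, 1) : ℤ × ℤ) ∈ S) : ∃ i, ContainsCopy S i := by
  obtain ⟨⟨x, y⟩, hp, hpos⟩ := hS.exists_wedge_pos (-1, 1) (by simp)
  simp only [wedge] at hpos
  rcases le_or_gt 0 y with hy | hy
  · exact hS.containsCopy_of_upper h1 h2 hp (by omega) hy
  rcases le_or_gt 0 x with hx | hx
  · have hb : IsLatticeBasis (0, 1) (1, 0) := by decide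
    obtain ⟨i, hi⟩ := (hS.preimage_act hb).containsCopy_of_upper (x := y) (y := x)
      (by simpa [act] using h2) (by simpa [act] using h1) (by simpa [act] using hp) (by omega) hx
    exact ⟨i, hi.of_preimage hb⟩
  rcases lt_trichotomy x y with hlt | rfl | hlt
  · have := (hS.mem_of_combination (r := (-1, 0)) hp h2 (by simp) 1 (-y) (-x) (by simp) (by omega)
      (by omega) (by omega) (by simp) (by simp)).2
    exact hS.containsCopy_of_antipodal h1 (by simpa using this) (by simp)
  · have := (hS.mem_of_combination (r := (-1, -1)) hp h2 (by simp) 1 0 (-x) (by simp) (by omega)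
      (by omega) (by omega) (by simp) (by simp)).2
    exact containsCopy_zero (by decide) h1 h2 this (by simp) (by simp)
  · have := (hS.mem_of_combination (r := (0, -1)) hp h1 (by simp) 1 (-x) (-y) (by simp) (by omega)
      (by omega) (by omega) (by simp) (by simp)).2
    exact hS.containsCopy_of_antipodal h2 (by simpa using this) (by simp)

theorem IsReflexiveSet.exists_containsCopy {S : Set (ℤ × ℤ)} (hS : IsReflexiveSet S) :
    ∃ i, ContainsCopy S i := by
  obtain ⟨p, hp, hpos⟩ := hS.exists_wedge_pos (1, 0) (by simp)
  obtain ⟨w, hw⟩ := hS.exists_isLatticeBasis hp (by rintro rfl; simp [wedge] at hpos)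
  have hS' := hS.preimage_act hw
  have h1 : ((1, 0) : ℤ × ℤ) ∈ act p w ⁻¹' S := by simpa [act] using hp
  obtain ⟨c, hc⟩ := hS'.exists_mem_height_one h1
  have hb : IsLatticeBasis (1, 0) (c, 1) := by simp [IsLatticeBasis, wedge]
  obtain ⟨i, hi⟩ := (hS'.preimage_act hb).containsCopy_of_standardBasis
    (by simpa [act] using hp) (by simpa [act] using hc)
  exact ⟨i, (hi.of_preimage hb).of_preimage hw⟩

/-- Every reflexive set is the image of one of the sixteen boundary cycles under `GL₂(ℤ)`. -/
theorem IsReflexiveSet.classification {S : Set (ℤ × ℤ)} (hS : IsReflexiveSet S)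
    (h0 : (0 : ℤ × ℤ) ∉ S) :
    ∃ i u w, IsLatticeBasis u w ∧ ∀ z, z ∈ boundaryCycle i ↔ act u w z ∈ S := by
  classical
  obtain ⟨i₀, hi₀⟩ := hS.exists_containsCopy
  obtain ⟨i, hi, hmax⟩ := (Finset.univ.filter (ContainsCopy S)).exists_max_image id
    ⟨i₀, by simpa using hi₀⟩
  simp only [Finset.mem_filter, Finset.mem_univ, true_and, id] at hi hmax
  obtain ⟨u, w, hb, hsub⟩ := hi
  refine ⟨i, u, w, hb, fun z => ⟨hsub z, fun hz => ?_⟩⟩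
  by_contra hzi
  obtain ⟨j, hij, hj⟩ := (hS.preimage_act hb).exists_lt_containsCopy
    (by simpa [act, ← Prod.zero_eq_mk] using h0) hsub hz hzi
  exact absurd (hmax j (hj.of_preimage hb)) (not_le.2 hij)

/-! ### Integral equivalence -/

/-- The affine map `x ↦ Mx + v` of the real plane given by integral data. -/
noncomputable def integralAffineMap (M : Matrix (Fin 2) (Fin 2) ℤ) (v : Fin 2 → ℤ) :
    (Fin 2 → ℝ) →ᵃ[ℝ] (Fin 2 → ℝ) :=
  (M.map (Int.cast : ℤ → ℝ)).mulVecLin.toAffineMap + AffineMap.const ℝ _ fun i => (v i : ℝ)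

theorem integralAffineMap_apply (M : Matrix (Fin 2) (Fin 2) ℤ) (v : Fin 2 → ℤ) (x : Fin 2 → ℝ) :
    integralAffineMap M v x = (M.map (Int.cast : ℤ → ℝ)).mulVec x + fun i => (v i : ℝ) := by
  simp [integralAffineMap]

theorem integralEquiv_iff {A B : Set (Fin 2 → ℝ)} : IntegralEquiv A B ↔
    ∃ M : Matrix (Fin 2) (Fin 2) ℤ, IsUnit M.det ∧ ∃ v, B = integralAffineMap M v '' A := by
  simp only [IntegralEquiv, ← integralAffineMap_apply]

theorem integralAffineMap_comp (M N : Matrix (Fin 2) (Fin 2) ℤ) (v w : Fin 2 → ℤ)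
    (x : Fin 2 → ℝ) : integralAffineMap M v (integralAffineMap N w x) =
      integralAffineMap (M * N) (M.mulVec w + v) x := by
  ext i
  simp only [integralAffineMap_apply, Matrix.mulVec, dotProduct, Fin.sum_univ_two, Matrix.mul_apply,
    Matrix.map_apply, Pi.add_apply]
  push_cast
  ring

theorem integralAffineMap_one_zero (x : Fin 2 → ℝ) : integralAffineMap 1 0 x = x := by
  ext i
  simp [integralAffineMap_apply]

theorem integralAffineMap_leftInverse {M : Matrix (Fin 2) (Fin 2) ℤ} (hM : IsUnit M.det)
    (v : Fin 2 → ℤ) :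
    Function.LeftInverse (integralAffineMap M⁻¹ (-M⁻¹.mulVec v)) (integralAffineMap M v) := by
  intro x
  rw [integralAffineMap_comp, Matrix.nonsing_inv_mul _ hM, add_neg_cancel,
    integralAffineMap_one_zero]

theorem integralEquiv_equivalence : Equivalence IntegralEquiv where
  refl A := integralEquiv_iff.2 ⟨1, by simp, 0, by simp [integralAffineMap_one_zero]⟩
  symm {A B} h := by
    obtain ⟨M, hM, v, rfl⟩ := integralEquiv_iff.1 h
    refine integralEquiv_iff.2 ⟨M⁻¹, Matrix.isUnit_nonsing_inv_det M hM, -M⁻¹.mulVec v, ?_⟩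
    exact ((integralAffineMap_leftInverse hM v).image_image A).symm
  trans {A B C} h h' := by
    obtain ⟨M, hM, v, rfl⟩ := integralEquiv_iff.1 h
    obtain ⟨N, hN, w, rfl⟩ := integralEquiv_iff.1 h'
    refine integralEquiv_iff.2 ⟨N * M, by simpa using ⟨hN, hM⟩, N.mulVec v + w, ?_⟩
    simp only [Set.image_image, integralAffineMap_comp]

theorem AffineMap.image_extremePoints_of_injective {E F : Type*} [AddCommGroup E] [Module ℝ E]
    [AddCommGroup F] [Module ℝ F] (f : E →ᵃ[ℝ] F) (hf : Function.Injective f) (A : Set E) :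
    f '' A.extremePoints ℝ = (f '' A).extremePoints ℝ := by
  ext y
  constructor
  · rintro ⟨x, hx, rfl⟩
    refine ⟨⟨x, hx.1, rfl⟩, ?_⟩
    rintro _ ⟨a, ha, rfl⟩ _ ⟨b, hb, rfl⟩ hab
    rw [← image_openSegment] at hab
    obtain ⟨x', hx', he⟩ := hab
    rw [hf he] at hx'
    rw [hx.2 ha hb hx']
  · rintro ⟨⟨x, hx, rfl⟩, h⟩
    refine ⟨x, ⟨hx, fun a ha b hb hab => hf (h ⟨a, ha, rfl⟩ ⟨b, hb, rfl⟩ ?_)⟩, rfl⟩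
    rw [← image_openSegment]
    exact ⟨x, hab, rfl⟩

theorem IntegralEquiv.ncard_extremePoints {A B : Set (Fin 2 → ℝ)} (h : IntegralEquiv A B) :
    (B.extremePoints ℝ).ncard = (A.extremePoints ℝ).ncard := by
  obtain ⟨M, hM, v, rfl⟩ := integralEquiv_iff.1 h
  have hinj := (integralAffineMap_leftInverse hM v).injective
  rw [← AffineMap.image_extremePoints_of_injective _ hinj, Set.ncard_image_of_injective _ hinj]

/-! ### Convexity lemmas -/

theorem Convex.combo_three_mem {E : Type*} [AddCommGroup E] [Module ℝ E] {A : Set E}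
    (hA : Convex ℝ A) {x y z : E} (hx : x ∈ A) (hy : y ∈ A) (hz : z ∈ A) {a b c : ℝ} (ha : 0 ≤ a)
    (hb : 0 ≤ b) (hc : 0 ≤ c) (habc : a + b + c = 1) : a • x + b • y + c • z ∈ A := by
  have := hA.sum_mem (t := Finset.univ) (w := ![a, b, c]) (z := ![x, y, z])
    (by simp [Fin.forall_fin_succ, ha, hb, hc]) (by simp [Fin.sum_univ_three, habc])
    (by simp [Fin.forall_fin_succ, hx, hy, hz])
  simpa [Fin.sum_univ_three] using this

theorem Convex.combo_three_mem_interior {A : Set (Fin 2 → ℝ)} (hA : Convex ℝ A)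
    {x y z : Fin 2 → ℝ} (hx : x ∈ A) (hy : y ∈ A) (hz : z ∈ interior A) {a b c : ℝ} (ha : 0 ≤ a)
    (hb : 0 ≤ b) (hc : 0 < c) (habc : a + b + c = 1) : a • x + b • y + c • z ∈ interior A := by
  have hd : 0 < 1 - b := by linarith
  have h1 := hA.combo_self_interior_mem_interior hx hz (a := a / (1 - b)) (b := c / (1 - b))
    (by positivity) (by positivity) (by field_simp; linarith)
  have h2 := hA.combo_self_interior_mem_interior hy h1 hb hd (by ring)
  convert h2 using 1
  rw [smul_add, smul_smul, smul_smul, mul_div_cancel₀ _ hd.ne', mul_div_cancel₀ _ hd.ne']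
  abel

theorem exists_pos_add_smul_mem {A : Set (Fin 2 → ℝ)} {x : Fin 2 → ℝ} (hx : x ∈ interior A)
    (d : Fin 2 → ℝ) : ∃ t : ℝ, 0 < t ∧ x + t • d ∈ A := by
  have hc : Continuous fun t : ℝ => x + t • d := by fun_prop
  have h1 : ∀ᶠ t in nhds (0 : ℝ), x + t • d ∈ A :=
    hc.continuousAt (by simpa using mem_interior_iff_mem_nhds.1 hx)
  have h2 : ∀ᶠ t in nhdsWithin (0 : ℝ) (Set.Ioi 0), x + t • d ∈ A := h1.filter_mono inf_le_left
  obtain ⟨t, ht, ht0⟩ := (h2.and self_mem_nhdsWithin).exists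
  exact ⟨t, ht0, ht⟩

/-! ### The sixteen polygons in the real plane -/

/-- The real vector with given integer coordinates. -/
def toPlane (p : ℤ × ℤ) : Fin 2 → ℝ := ![(p.1 : ℝ), (p.2 : ℝ)]

theorem toPlane_injective : Function.Injective toPlane := by
  intro p q h
  have h0 := congrFun h 0
  have h1 := congrFun h 1
  simp only [toPlane, Matrix.cons_val_zero, Matrix.cons_val_one, Int.cast_inj] at h0 h1
  exact Prod.ext h0 h1

theorem intCast_eq_toPlane (p : Fin 2 → ℤ) : (fun i => (p i : ℝ)) = toPlane (p 0, p 1) := by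
  ext i; fin_cases i <;> rfl

/-- The convex hull of a list of integer vectors. -/
def hullOfList (L : List (ℤ × ℤ)) : Set (Fin 2 → ℝ) := convexHull ℝ (toPlane '' {p | p ∈ L})

theorem isLatticePolygon_hullOfList (L : List (ℤ × ℤ)) : IsLatticePolygon (hullOfList L) := by
  refine ⟨L.toFinset.image fun p => ![p.1, p.2], ?_⟩
  rw [hullOfList]
  congr 1
  ext x
  simp [intCast_eq_toPlane]

/-- The linear functional `wedge · d` on the real plane. -/
def realWedge (x : Fin 2 → ℝ) (d : ℤ × ℤ) : ℝ := x 0 * d.2 - x 1 * d.1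

theorem realWedge_toPlane (p d : ℤ × ℤ) : realWedge (toPlane p) d = wedge p d := by
  simp [realWedge, toPlane, wedge]

theorem realWedge_combo (a b : ℝ) (x y : Fin 2 → ℝ) (d : ℤ × ℤ) :
    realWedge (a • x + b • y) d = a * realWedge x d + b * realWedge y d := by
  simp [realWedge]; ring

theorem IsReflexiveCycle.zero_mem_hullOfList {L : List (ℤ × ℤ)} (hL : IsReflexiveCycle L) :
    0 ∈ hullOfList L := by
  have hmem : ∀ p ∈ L, toPlane p ∈ hullOfList L := fun p hp => subset_convexHull ℝ _ ⟨p, hp, rfl⟩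
  have hconv : Convex ℝ (hullOfList L) := convex_convexHull ℝ _
  rcases hL.2.2 with ⟨p, hp, hq⟩ | ⟨p, hp, q, hq, hr⟩
  · convert hconv (hmem _ hp) (hmem _ hq) (a := 1 / 2) (b := 1 / 2) (by norm_num) (by norm_num)
      (by norm_num) using 1
    ext i; fin_cases i <;> simp [toPlane]
  · convert hconv.combo_three_mem (hmem _ hp) (hmem _ hq) (hmem _ hr) (a := 1 / 3) (b := 1 / 3)
      (c := 1 / 3) (by norm_num) (by norm_num) (by norm_num) (by norm_num) using 1
    ext i; fin_cases i <;> simp [toPlane] <;> ring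

/-- The hull of a reflexive cycle is cut out by the inequalities of its edges. -/
theorem IsReflexiveCycle.mem_hullOfList_iff {L : List (ℤ × ℤ)} (hL : IsReflexiveCycle L)
    (x : Fin 2 → ℝ) :
    x ∈ hullOfList L ↔ ∀ e ∈ cyclicPairs L, realWedge x (e.2 - e.1) ≤ 1 := by
  constructor
  · intro hx e he
    have hsub : hullOfList L ⊆ {x | realWedge x (e.2 - e.1) ≤ 1} := by
      refine convexHull_min ?_ ?_
      · rintro _ ⟨p, hp, rfl⟩
        rw [Set.mem_ofPred_eq, realWedge_toPlane]
        exact_mod_cast hL.2.1 e he p hp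
      · intro y hy z hz a b ha hb hab
        simp only [Set.mem_ofPred_eq, realWedge_combo] at hy hz ⊢
        nlinarith [mul_le_mul_of_nonneg_left hy ha, mul_le_mul_of_nonneg_left hz hb]
    exact hsub hx
  · intro hx
    obtain ⟨e, he, h1, h2⟩ := hL.exists_cone (x 0) (x 1)
    obtain ⟨hm1, hm2⟩ := mem_of_mem_cyclicPairs he
    have hdet : (e.1.1 * e.2.2 - e.1.2 * e.2.1 : ℝ) = 1 := by exact_mod_cast hL.1 e he
    have hle := hx e he
    simp only [realWedge, Prod.fst_sub, Prod.snd_sub, Int.cast_sub] at hle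
    have key := (convex_convexHull ℝ (toPlane '' {p | p ∈ L})).combo_three_mem
      (subset_convexHull ℝ _ ⟨_, hm1, rfl⟩) (subset_convexHull ℝ _ ⟨_, hm2, rfl⟩)
      hL.zero_mem_hullOfList h1 h2
      (c := 1 - (x 0 * e.2.2 - x 1 * e.2.1) - (e.1.1 * x 1 - e.1.2 * x 0)) (by linarith) (by ring)
    rw [hullOfList]
    convert key using 1
    ext i
    fin_cases i
    · simp [toPlane]; linear_combination (-x 0) * hdet
    · simp [toPlane]; linear_combination (-x 1) * hdet

theorem IsReflexiveCycle.exists_wedge_eq_one {L : List (ℤ × ℤ)} (hL : IsReflexiveCycle L)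
    {z : ℤ × ℤ} (hz : toPlane z ∈ hullOfList L)
    (hz0 : z ≠ 0) : z ∈ L ∧ ∃ e ∈ cyclicPairs L, wedge z (e.2 - e.1) = 1 := by
  obtain ⟨e, he, a, b, ha, hb, h1, h2, hab⟩ := hL.exists_combination z
  have hle := (hL.mem_hullOfList_iff _).1 hz e he
  rw [realWedge_toPlane] at hle
  have hle' : wedge z (e.2 - e.1) ≤ 1 := by exact_mod_cast hle
  obtain ⟨hm1, hm2⟩ := mem_of_mem_cyclicPairs he
  have hcases : (a = 0 ∧ b = 0) ∨ (a = 1 ∧ b = 0) ∨ (a = 0 ∧ b = 1) := by omega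
  rcases hcases with ⟨rfl, rfl⟩ | ⟨rfl, rfl⟩ | ⟨rfl, rfl⟩
  · exact absurd (Prod.ext (by simpa using h1) (by simpa using h2)) hz0
  · obtain rfl : z = e.1 := Prod.ext (by simpa using h1) (by simpa using h2)
    exact ⟨hm1, e, he, by simpa using hab⟩
  · obtain rfl : z = e.2 := Prod.ext (by simpa using h1) (by simpa using h2)
    exact ⟨hm2, e, he, by simpa using hab⟩

theorem IsReflexiveCycle.toPlane_mem_hullOfList_iff {L : List (ℤ × ℤ)} (hL : IsReflexiveCycle L)
    (z : ℤ × ℤ) :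
    toPlane z ∈ hullOfList L ↔ z ∈ insert 0 L.toFinset := by
  rw [Finset.mem_insert, List.mem_toFinset]
  constructor
  · intro hz
    by_cases hz0 : z = 0
    exacts [.inl hz0, .inr (hL.exists_wedge_eq_one hz hz0).1]
  · rintro (rfl | hz)
    · convert hL.zero_mem_hullOfList using 1
      ext i; fin_cases i <;> simp [toPlane]
    · exact subset_convexHull ℝ _ ⟨z, hz, rfl⟩

theorem IsReflexiveCycle.toPlane_mem_interior_iff {L : List (ℤ × ℤ)} (hL : IsReflexiveCycle L)
    (z : ℤ × ℤ) :
    toPlane z ∈ interior (hullOfList L) ↔ z = 0 := by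
  constructor
  · intro hz
    by_contra hz0
    obtain ⟨-, e, he, h1⟩ := hL.exists_wedge_eq_one (interior_subset hz) hz0
    obtain ⟨t, ht, hmem⟩ := exists_pos_add_smul_mem hz (toPlane z)
    have hle := (hL.mem_hullOfList_iff _).1 hmem e he
    rw [← one_smul ℝ (toPlane z), smul_smul, realWedge_combo, realWedge_toPlane, h1] at hle
    push_cast at hle
    linarith
  · rintro rfl
    rw [mem_interior_iff_mem_nhds]
    have hfin : {e | e ∈ cyclicPairs L}.Finite := List.finite_toSet _
    have hev : ∀ᶠ x in nhds (toPlane 0), ∀ e ∈ {e | e ∈ cyclicPairs L},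
        realWedge x (e.2 - e.1) < 1 := by
      refine (Filter.eventually_all_finite hfin).2 fun e he => ?_
      have hc : Continuous fun x : Fin 2 → ℝ => realWedge x (e.2 - e.1) := by
        unfold realWedge; fun_prop
      refine hc.continuousAt.eventually_lt continuousAt_const ?_
      simp [realWedge_toPlane, wedge]
    filter_upwards [hev] with x hx
    exact (hL.mem_hullOfList_iff x).2 fun e he => (hx e he).le

theorem IsReflexiveCycle.ncard_interior {L : List (ℤ × ℤ)} (hL : IsReflexiveCycle L) :
    {p : Fin 2 → ℤ | (fun i => (p i : ℝ)) ∈ interior (hullOfList L)}.ncard = 1 := by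
  rw [Set.ncard_eq_one]
  refine ⟨0, Set.ext fun p => ?_⟩
  rw [Set.mem_ofPred_eq, intCast_eq_toPlane, hL.toPlane_mem_interior_iff, Set.mem_singleton_iff]
  simp [Prod.ext_iff, funext_iff, Fin.forall_fin_two]

/-- A point lying on two non-parallel edges is extreme. -/
theorem IsReflexiveCycle.toPlane_mem_extremePoints {L : List (ℤ × ℤ)} (hL : IsReflexiveCycle L)
    {p : ℤ × ℤ} (hp : p ∈ L)
    {e e' : (ℤ × ℤ) × ℤ × ℤ} (he : e ∈ cyclicPairs L) (he' : e' ∈ cyclicPairs L)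
    (h : wedge p (e.2 - e.1) = 1) (h' : wedge p (e'.2 - e'.1) = 1)
    (hne : wedge (e.2 - e.1) (e'.2 - e'.1) ≠ 0) :
    toPlane p ∈ (hullOfList L).extremePoints ℝ := by
  refine ⟨subset_convexHull ℝ _ ⟨p, hp, rfl⟩, ?_⟩
  rintro x hx y hy ⟨a, b, ha, hb, hab, hxy⟩
  have key : ∀ f ∈ cyclicPairs L, wedge p (f.2 - f.1) = 1 →
      realWedge x (f.2 - f.1) = realWedge (toPlane p) (f.2 - f.1) := by
    intro f hf hf1
    have h1 := (hL.mem_hullOfList_iff x).1 hx f hf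
    have h2 := (hL.mem_hullOfList_iff y).1 hy f hf
    have h3 : a * realWedge x (f.2 - f.1) + b * realWedge y (f.2 - f.1) = 1 := by
      rw [← realWedge_combo, hxy, realWedge_toPlane, hf1]; simp
    rw [realWedge_toPlane, hf1, Int.cast_one]
    refine le_antisymm h1 ?_
    nlinarith [mul_le_mul_of_nonneg_left h2 hb.le]
  have h1 := key e he h
  have h2 := key e' he' h'
  generalize e.2 - e.1 = d at *
  generalize e'.2 - e'.1 = d' at *
  have hne' : (wedge d d' : ℝ) ≠ 0 := by exact_mod_cast hne
  simp only [realWedge, wedge, Int.cast_sub, Int.cast_mul] at h1 h2 hne'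
  ext i
  fin_cases i
  · refine mul_right_cancel₀ hne' ?_
    simp only [Fin.zero_eta]
    linear_combination d.1 * h2 - d'.1 * h1
  · refine mul_right_cancel₀ hne' ?_
    simp only [Fin.mk_one]
    linear_combination d.2 * h2 - d'.2 * h1

/-- The points of a cycle that lie on two non-parallel edges. -/
def corners (L : List (ℤ × ℤ)) : Finset (ℤ × ℤ) :=
  L.toFinset.filter fun p => ∃ e ∈ cyclicPairs L, ∃ e' ∈ cyclicPairs L,
    wedge p (e.2 - e.1) = 1 ∧ wedge p (e'.2 - e'.1) = 1 ∧ wedge (e.2 - e.1) (e'.2 - e'.1) ≠ 0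

/-- The `i`-th of the sixteen polygons. -/
def reflexivePolygon (i : Fin 16) : Set (Fin 2 → ℝ) := hullOfList (boundaryCycle i)

theorem mem_corners_or_midpoint : ∀ i : Fin 16, ∀ p ∈ boundaryCycle i,
    p ∈ corners (boundaryCycle i) ∨
      ∃ a ∈ boundaryCycle i, ∃ b ∈ boundaryCycle i, a ≠ p ∧ a + b = p + p := by
  decide +kernel

theorem extremePoints_reflexivePolygon (i : Fin 16) :
    (reflexivePolygon i).extremePoints ℝ = toPlane '' corners (boundaryCycle i) := by
  apply Set.Subset.antisymm
  · intro x hx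
    obtain ⟨p, hp, rfl⟩ := extremePoints_convexHull_subset hx
    refine ⟨p, ?_, rfl⟩
    rcases mem_corners_or_midpoint i p hp with h | ⟨a, ha, b, hb, hne, hab⟩
    · exact h
    · refine absurd (toPlane_injective (hx.2 (subset_convexHull ℝ _ ⟨a, ha, rfl⟩)
        (subset_convexHull ℝ _ ⟨b, hb, rfl⟩) ⟨1 / 2, 1 / 2, by norm_num, by norm_num,
        by norm_num, ?_⟩)) hne
      have h1 : (a.1 + b.1 : ℝ) = p.1 + p.1 := by exact_mod_cast congrArg Prod.fst hab
      have h2 : (a.2 + b.2 : ℝ) = p.2 + p.2 := by exact_mod_cast congrArg Prod.snd hab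
      ext i
      fin_cases i
      · simp [toPlane]; linarith
      · simp [toPlane]; linarith
  · rintro _ ⟨p, hp, rfl⟩
    simp only [corners, Finset.coe_filter, List.mem_toFinset, Set.mem_ofPred_eq] at hp
    obtain ⟨hp, e, he, e', he', h, h', hne⟩ := hp
    exact (isReflexiveCycle_boundaryCycle i).toPlane_mem_extremePoints hp he he' h h' hne

theorem ncard_extremePoints_reflexivePolygon (i : Fin 16) :
    ((reflexivePolygon i).extremePoints ℝ).ncard = (corners (boundaryCycle i)).card := by
  rw [extremePoints_reflexivePolygon, Set.ncard_image_of_injective _ toPlane_injective,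
    Set.ncard_coe_finset]

/-! ### The sixteen polygons are pairwise inequivalent -/

/-- The sum of the squared normalized areas of all triangles with vertices in a finite set. -/
def triangleMoment (T : Finset (ℤ × ℤ)) : ℤ :=
  ∑ t ∈ T ×ˢ T ×ˢ T, wedge (t.2.1 - t.1) (t.2.2 - t.1) ^ 2

theorem triangleMoment_le_of_mapsTo {T T' : Finset (ℤ × ℤ)} {f : ℤ × ℤ → ℤ × ℤ}
    (hf : Function.Injective f) (hT : ∀ p ∈ T, f p ∈ T')
    (hw : ∀ p q r, wedge (f q - f p) (f r - f p) ^ 2 = wedge (q - p) (r - p) ^ 2) :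
    triangleMoment T ≤ triangleMoment T' := by
  classical
  have hinj : Function.Injective (Prod.map f (Prod.map f f)) := hf.prodMap (hf.prodMap hf)
  calc triangleMoment T
      = ∑ t ∈ (T ×ˢ T ×ˢ T).image (Prod.map f (Prod.map f f)),
          wedge (t.2.1 - t.1) (t.2.2 - t.1) ^ 2 := by
        rw [Finset.sum_image hinj.injOn]
        exact Finset.sum_congr rfl fun t _ => (hw _ _ _).symm
    _ ≤ triangleMoment T' := by
        refine Finset.sum_le_sum_of_subset_of_nonneg ?_ fun _ _ _ => sq_nonneg _
        intro t ht
        obtain ⟨⟨p, q, r⟩, hs, rfl⟩ := Finset.mem_image.1 ht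
        simp only [Finset.mem_product] at hs
        simp [hT _ hs.1, hT _ hs.2.1, hT _ hs.2.2]

theorem triangleMoment_boundaryCycle (i : Fin 16) :
    triangleMoment (insert 0 (boundaryCycle i).toFinset) =
      ![72, 192, 138, 120, 336, 264, 870, 630, 576, 504, 1320, 1080, 2736, 1944, 2250, 4500] i := by
  revert i
  decide +kernel

theorem integralAffineMap_toPlane (M : Matrix (Fin 2) (Fin 2) ℤ) (v : Fin 2 → ℤ) (z : ℤ × ℤ) :
    integralAffineMap M v (toPlane z) =
      toPlane (act (M 0 0, M 1 0) (M 0 1, M 1 1) z + (v 0, v 1)) := by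
  ext i
  fin_cases i <;>
    simp [integralAffineMap_apply, toPlane, act] <;>
    ring

theorem triangleMoment_le_of_integralEquiv {i j : Fin 16}
    (h : IntegralEquiv (reflexivePolygon i) (reflexivePolygon j)) :
    triangleMoment (insert 0 (boundaryCycle i).toFinset) ≤
      triangleMoment (insert 0 (boundaryCycle j).toFinset) := by
  obtain ⟨M, hM, v, hv⟩ := integralEquiv_iff.1 h
  refine triangleMoment_le_of_mapsTo
    (f := fun z => act (M 0 0, M 1 0) (M 0 1, M 1 1) z + (v 0, v 1)) ?_ ?_ ?_
  · intro p q hpq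
    apply toPlane_injective
    apply (integralAffineMap_leftInverse hM v).injective
    rw [integralAffineMap_toPlane, integralAffineMap_toPlane]
    exact congrArg toPlane hpq
  · intro p hp
    rw [← (isReflexiveCycle_boundaryCycle i).toPlane_mem_hullOfList_iff] at hp
    rw [← (isReflexiveCycle_boundaryCycle j).toPlane_mem_hullOfList_iff,
      ← integralAffineMap_toPlane]
    change _ ∈ reflexivePolygon j
    rw [hv]
    exact Set.mem_image_of_mem _ hp
  · intro p q r
    rw [Matrix.det_fin_two, Int.isUnit_iff] at hM
    have hsq : (M 0 0 * M 1 1 - M 0 1 * M 1 0) ^ 2 = 1 := by rcases hM with h | h <;> simp [h]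
    simp only [wedge, act, Prod.fst_sub, Prod.snd_sub, Prod.fst_add, Prod.snd_add]
    linear_combination ((q.1 - p.1) * (r.2 - p.2) - (q.2 - p.2) * (r.1 - p.1)) ^ 2 * hsq

theorem eq_of_integralEquiv_reflexivePolygon {i j : Fin 16}
    (h : IntegralEquiv (reflexivePolygon i) (reflexivePolygon j)) : i = j := by
  have heq := (triangleMoment_le_of_integralEquiv h).antisymm
    (triangleMoment_le_of_integralEquiv (integralEquiv_equivalence.symm h))
  rw [triangleMoment_boundaryCycle, triangleMoment_boundaryCycle] at heq
  clear h
  revert i j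
  decide +kernel

/-! ### Every polygon with one interior lattice point is one of the sixteen -/

theorem isReflexiveSet_of_interior {F : Finset (Fin 2 → ℤ)} {A : Set (Fin 2 → ℝ)}
    (hF : A = convexHull ℝ ((fun p : Fin 2 → ℤ => fun i => (p i : ℝ)) '' ↑F)) {v : ℤ × ℤ}
    (hv : ∀ p, toPlane p ∈ interior A ↔ p = v) :
    IsReflexiveSet {z | z ≠ 0 ∧ toPlane (z + v) ∈ A} where
  mem_of_combination {p q r} hp hq hr a b k ha hb hk hab h1 h2 := by
    have hconv : Convex ℝ A := hF ▸ convex_convexHull ℝ _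
    have hvi : toPlane v ∈ interior A := (hv v).2 rfl
    have hk' : (0 : ℝ) < k := by exact_mod_cast hk
    have ha' : (0 : ℝ) ≤ a / k := div_nonneg (by exact_mod_cast ha) hk'.le
    have hb' : (0 : ℝ) ≤ b / k := div_nonneg (by exact_mod_cast hb) hk'.le
    have h1' : (k * r.1 : ℝ) = a * p.1 + b * q.1 := by exact_mod_cast h1
    have h2' : (k * r.2 : ℝ) = a * p.2 + b * q.2 := by exact_mod_cast h2
    have hsum : (a / k + b / k + (k - a - b) / k : ℝ) = 1 := by field_simp; ring
    have heq : toPlane (r + v) = (a / k : ℝ) • toPlane (p + v) + (b / k : ℝ) • toPlane (q + v) +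
        ((k - a - b) / k : ℝ) • toPlane v := by
      ext i
      fin_cases i
      · simp [toPlane]; field_simp; linear_combination h1'
      · simp [toPlane]; field_simp; linear_combination h2'
    refine ⟨?_, hr, ?_⟩
    · by_contra hne
      have hlt : (0 : ℝ) < k - a - b := by
        have : 0 < k - a - b := by omega
        exact_mod_cast this
      have hrv := hconv.combo_three_mem_interior hp.2 hq.2 hvi ha' hb' (div_pos hlt hk') hsum
      rw [← heq, hv] at hrv
      exact hr (by simpa using hrv)
    · have hle : (0 : ℝ) ≤ k - a - b := by
        have : 0 ≤ k - a - b := by omega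
        exact_mod_cast this
      rw [heq]
      exact hconv.combo_three_mem hp.2 hq.2 (interior_subset hvi) ha' hb'
        (div_nonneg hle hk'.le) hsum
  exists_wedge_pos u hu := by
    by_contra! hcon
    have hsub : A ⊆ {x | u.1 * (x 1 - v.2) - u.2 * (x 0 - v.1) ≤ 0} := by
      rw [hF]
      refine convexHull_min ?_ ?_
      · rintro _ ⟨f, hf, rfl⟩
        have hle : wedge u ((f 0, f 1) - v) ≤ 0 := by
          by_cases h0 : ((f 0, f 1) : ℤ × ℤ) - v = 0
          · simp [h0, wedge]
          · refine hcon _ ⟨h0, ?_⟩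
            rw [sub_add_cancel, ← intCast_eq_toPlane, hF]
            exact subset_convexHull ℝ _ ⟨f, hf, rfl⟩
        simp only [wedge, Prod.fst_sub, Prod.snd_sub] at hle
        simp only [Set.mem_ofPred_eq]
        exact_mod_cast hle
      · intro x hx y hy a b ha hb hab
        simp only [Set.mem_ofPred_eq, Pi.add_apply, Pi.smul_apply, smul_eq_mul] at hx hy ⊢
        have h1 := mul_nonpos_of_nonneg_of_nonpos ha hx
        have h2 := mul_nonpos_of_nonneg_of_nonpos hb hy
        have hb1 : b = 1 - a := by linarith
        subst hb1
        linarith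
    obtain ⟨t, ht, hmem⟩ := exists_pos_add_smul_mem ((hv v).2 rfl) (toPlane (-u.2, u.1))
    have hle := hsub hmem
    simp only [toPlane, Set.mem_ofPred_eq, Pi.add_apply, Pi.smul_apply, smul_eq_mul,
      Matrix.cons_val_zero, Matrix.cons_val_one] at hle
    push_cast at hle
    have hu2 : (0 : ℝ) < u.1 ^ 2 + u.2 ^ 2 := by
      have hne : u.1 ≠ 0 ∨ u.2 ≠ 0 := by
        by_contra! h
        exact hu (Prod.ext h.1 h.2)
      rcases hne with h | h
      · have : (u.1 : ℝ) ≠ 0 := by exact_mod_cast h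
        positivity
      · have : (u.2 : ℝ) ≠ 0 := by exact_mod_cast h
        positivity
    nlinarith [mul_pos ht hu2]

theorem exists_integralEquiv_reflexivePolygon {A : Set (Fin 2 → ℝ)} (hA : IsLatticePolygon A)
    (hcard : {p : Fin 2 → ℤ | (fun i => (p i : ℝ)) ∈ interior A}.ncard = 1) :
    ∃ i, IntegralEquiv (reflexivePolygon i) A := by
  obtain ⟨F, hF⟩ := hA
  obtain ⟨v, hv⟩ := Set.ncard_eq_one.1 hcard
  have hv' : ∀ p, toPlane p ∈ interior A ↔ p = (v 0, v 1) := by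
    intro p
    have := Set.ext_iff.1 hv ![p.1, p.2]
    rw [Set.mem_ofPred_eq, intCast_eq_toPlane, Set.mem_singleton_iff] at this
    simpa [Prod.ext_iff, funext_iff, Fin.forall_fin_two] using this
  obtain ⟨i, u, w, hb, hi⟩ := (isReflexiveSet_of_interior hF hv').classification (by simp)
  have hconv : Convex ℝ A := hF ▸ convex_convexHull ℝ _
  set M : Matrix (Fin 2) (Fin 2) ℤ := !![u.1, w.1; u.2, w.2] with hM
  have hmap : ∀ z, integralAffineMap M v (toPlane z) = toPlane (act u w z + (v 0, v 1)) := by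
    intro z
    rw [integralAffineMap_toPlane]
    simp [hM]
  refine ⟨i, integralEquiv_iff.2 ⟨M, ?_, v, ?_⟩⟩
  · rw [hM, Matrix.det_fin_two_of, Int.isUnit_iff]
    simpa [IsLatticeBasis, wedge, mul_comm] using hb
  · rw [reflexivePolygon, hullOfList, AffineMap.image_convexHull]
    apply Set.Subset.antisymm
    · rw [← AffineMap.image_convexHull]
      conv_lhs => rw [hF]
      refine convexHull_min ?_ ((convex_convexHull ℝ _).affine_image _)
      rintro _ ⟨f, hf, rfl⟩
      obtain ⟨z, hz⟩ := hb.exists_act_eq ((f 0, f 1) - (v 0, v 1))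
      have hfz : ((f 0, f 1) : ℤ × ℤ) = act u w z + (v 0, v 1) := by rw [hz, sub_add_cancel]
      refine ⟨toPlane z, ?_, by rw [hmap, ← hfz]; exact (intCast_eq_toPlane f).symm⟩
      refine ((isReflexiveCycle_boundaryCycle i).toPlane_mem_hullOfList_iff z).2 ?_
      rw [Finset.mem_insert, List.mem_toFinset, hi]
      by_cases hz0 : z = 0
      · exact .inl hz0
      · refine .inr ⟨hb.act_ne_zero hz0, ?_⟩
        rw [← hfz, ← intCast_eq_toPlane, hF]
        exact subset_convexHull ℝ _ ⟨f, hf, rfl⟩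
    · refine convexHull_min ?_ hconv
      rintro _ ⟨_, ⟨z, hz, rfl⟩, rfl⟩
      rw [hmap]
      exact ((hi z).1 hz).2

theorem card_quot_integralEquiv {P : Set (Fin 2 → ℝ) → Prop} (I : Finset (Fin 16))
    (hI : ∀ i ∈ I, P (reflexivePolygon i))
    (hP : ∀ A, P A → ∃ i ∈ I, IntegralEquiv (reflexivePolygon i) A) :
    Nat.card (Quot fun A B : {A : Set (Fin 2 → ℝ) // P A} => IntegralEquiv A.1 B.1) = I.card := by
  have hequiv : Equivalence fun A B : {A : Set (Fin 2 → ℝ) // P A} => IntegralEquiv A.1 B.1 :=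
    ⟨fun _ => integralEquiv_equivalence.refl _, integralEquiv_equivalence.symm,
      integralEquiv_equivalence.trans⟩
  let f : I → Quot fun A B : {A : Set (Fin 2 → ℝ) // P A} => IntegralEquiv A.1 B.1 :=
    fun i => Quot.mk _ ⟨reflexivePolygon i, hI i i.2⟩
  have hf : Function.Bijective f := by
    constructor
    · intro i j hij
      exact Subtype.ext (eq_of_integralEquiv_reflexivePolygon
        (hequiv.eqvGen_iff.1 (Quot.eqvGen_exact hij)))
    · rintro ⟨A, hA⟩
      obtain ⟨i, hi, h⟩ := hP A hA
      exact ⟨⟨i, hi⟩, Quot.sound h⟩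
  rw [← Nat.card_congr (Equiv.ofBijective f hf), Nat.card_eq_fintype_card, Fintype.card_coe]

theorem stmt_10 :
    Nat.card (Quot (fun A B : {A : Set (Fin 2 → ℝ) // IsLatticePolygon A ∧
        {p : Fin 2 → ℤ | (fun i => (p i : ℝ)) ∈ interior A}.ncard = 1} =>
      IntegralEquiv A.1 B.1)) = 16 ∧
    Nat.card (Quot (fun A B : {A : Set (Fin 2 → ℝ) // IsLatticePolygon A ∧
        {p : Fin 2 → ℤ | (fun i => (p i : ℝ)) ∈ interior A}.ncard = 1 ∧
        (Set.extremePoints ℝ A).ncard ≤ 4} =>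
      IntegralEquiv A.1 B.1)) = 12 := by
  have hprop (i : Fin 16) : IsLatticePolygon (reflexivePolygon i) ∧
      {p : Fin 2 → ℤ | (fun i => (p i : ℝ)) ∈ interior (reflexivePolygon i)}.ncard = 1 :=
    ⟨isLatticePolygon_hullOfList _, (isReflexiveCycle_boundaryCycle i).ncard_interior⟩
  constructor
  · refine (card_quot_integralEquiv Finset.univ (fun i _ => hprop i) ?_).trans (by simp)
    intro A hA
    obtain ⟨i, hi⟩ := exists_integralEquiv_reflexivePolygon hA.1 hA.2
    exact ⟨i, Finset.mem_univ i, hi⟩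
  · refine (card_quot_integralEquiv
      (Finset.univ.filter fun i => (corners (boundaryCycle i)).card ≤ 4) ?_ ?_).trans
      (by decide +kernel)
    · intro i hi
      refine ⟨(hprop i).1, (hprop i).2, ?_⟩
      rw [ncard_extremePoints_reflexivePolygon]
      exact (Finset.mem_filter.1 hi).2
    · intro A hA
      obtain ⟨i, hi⟩ := exists_integralEquiv_reflexivePolygon hA.1 hA.2.1
      refine ⟨i, Finset.mem_filter.2 ⟨Finset.mem_univ i, ?_⟩, hi⟩
      rw [← ncard_extremePoints_reflexivePolygon, ← hi.ncard_extremePoints]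
      exact hA.2.2
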